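/- For every real number a not of the form -j/2 with j a nonnegative integer, and every real z with 0 < z < 1: (d/dz)( z^{2a-1} · ₂F₁(1/2, a-1/2; a+1/2; z²) ) = (2a-1)·z^{2a-2} / √(1-z²). -/

import Mathlib

/-- The shifted factorial (Pochhammer symbol) `(α)_n = α(α+1)⋯(α+n-1)`, `(α)_0 = 1`. -/
def poch (α : ℝ) : ℕ → ℝ
  | 0 => 1
  | n + 1 => poch α n * (α + n)

/-- The Gauss hypergeometric series `₂F₁(α,β;γ;z) = ∑_{n≥0} (α)_n (β)_n / ((γ)_n n!) zⁿ`. -/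
noncomputable def Gauss2F1 (α β γ z : ℝ) : ℝ :=
  ∑' n : ℕ, poch α n * poch β n / (poch γ n * (Nat.factorial n : ℝ)) * z ^ n

/-!
The contiguous relation `(x d/dx + β) ₂F₁(α, β; γ; x) = β ₂F₁(α, β + 1; γ; x)` holds
coefficientwise, because `(β)_n (β + n) = β (β + 1)_n`. Multiplied by `x ^ (β - 1)`, it says that
`x ^ β ₂F₁(α, β; γ; x)` has derivative `β x ^ (β - 1) ₂F₁(α, β + 1; γ; x)`. When `γ = β + 1`, the
series in this derivative is the binomial series of `(1 - x) ^ (-α)`; substituting `x = w ^ 2`,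
`α = 1 / 2` and `β = a - 1 / 2` gives the theorem.
-/

section PowerSeries

variable {𝕜 E F : Type*} [NontriviallyNormedField 𝕜] [NormedAddCommGroup E] [NormedSpace 𝕜 E]
  [NormedAddCommGroup F] [NormedSpace 𝕜 F] [CompleteSpace F]

lemma hasSum_nsmul_apply_of_hasFPowerSeriesOnBall {f : E → F}
    {p : FormalMultilinearSeries 𝕜 E F} {x y : E} {r : ENNReal}
    (h : HasFPowerSeriesOnBall f p x r) (hy : y ∈ Metric.eball 0 r) :
    HasSum (fun n : ℕ => n • p n fun _ => y) (fderiv 𝕜 f (x + y) y) := by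
  have hderiv : HasSum (fun n : ℕ => p.derivSeries n (fun _ => y) y) (fderiv 𝕜 f (x + y) y) :=
    (h.fderiv.hasSum hy).mapL (ContinuousLinearMap.apply 𝕜 F y)
  simp only [FormalMultilinearSeries.derivSeries_apply_diag] at hderiv
  simpa using (hasSum_nat_add_iff (f := fun n : ℕ => n • p n fun _ => y) 1).1 hderiv

end PowerSeries

section OrdinaryHypergeometric

lemma ascPochhammer_eval_mul_add {R : Type*} [CommSemiring R] (b : R) (n : ℕ) :
    (ascPochhammer R n).eval b * (b + n) = b * (ascPochhammer R n).eval (b + 1) := by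
  rw [← ascPochhammer_succ_eval, ascPochhammer_succ_left]
  simp

variable {𝕂 : Type*} [RCLike 𝕂]

lemma one_le_ordinaryHypergeometricSeries_radius (𝔸 : Type*) [NormedDivisionRing 𝔸]
    [NormedAlgebra 𝕂 𝔸] (a b c : 𝕂) : 1 ≤ (ordinaryHypergeometricSeries 𝔸 a b c).radius := by
  by_cases habc : ∀ k : ℕ, ↑k ≠ -a ∧ ↑k ≠ -b ∧ ↑k ≠ -c
  · exact (ordinaryHypergeometricSeries_radius_eq_one 𝔸 a b c habc).ge
  · obtain ⟨k, hk⟩ : ∃ k : ℕ, a = -k ∨ b = -k ∨ c = -k := by grind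
    rcases hk with rfl | rfl | rfl
    · simp [ordinaryHypergeometric_radius_top_of_neg_nat₁]
    · simp [ordinaryHypergeometric_radius_top_of_neg_nat₂]
    · simp [ordinaryHypergeometric_radius_top_of_neg_nat₃]

lemma hasFPowerSeriesOnBall_ordinaryHypergeometric (𝔸 : Type*) [NormedDivisionRing 𝔸]
    [NormedAlgebra 𝕂 𝔸] [CompleteSpace 𝔸] (a b c : 𝕂) :
    HasFPowerSeriesOnBall (₂F₁ a b c : 𝔸 → 𝔸) (ordinaryHypergeometricSeries 𝔸 a b c) 0 1 :=
  have hradius := one_le_ordinaryHypergeometricSeries_radius 𝔸 a b c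
  (FormalMultilinearSeries.hasFPowerSeriesOnBall _ (zero_lt_one.trans_le hradius)).mono
    zero_lt_one hradius

lemma differentiableAt_ordinaryHypergeometric (a b c : 𝕂) {x : 𝕂} (hx : ‖x‖ < 1) :
    DifferentiableAt 𝕂 (₂F₁ a b c : 𝕂 → 𝕂) x :=
  (hasFPowerSeriesOnBall_ordinaryHypergeometric 𝕂 a b c).differentiableOn.differentiableAt
    (Metric.isOpen_eball.mem_nhds (by simpa [enorm_eq_nnnorm] using! hx))

lemma mul_deriv_ordinaryHypergeometric_add (a b c : 𝕂) {x : 𝕂} (hx : ‖x‖ < 1) :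
    x * deriv (₂F₁ a b c) x + b * ₂F₁ a b c x = b * ₂F₁ a (b + 1) c x := by
  have hmem : x ∈ Metric.eball (0 : 𝕂) 1 := by simpa [enorm_eq_nnnorm] using! hx
  have hseries (b : 𝕂) := hasFPowerSeriesOnBall_ordinaryHypergeometric 𝕂 a b c
  have hsum (b : 𝕂) := (hseries b).hasSum hmem
  have heuler := hasSum_nsmul_apply_of_hasFPowerSeriesOnBall (hseries b) hmem
  simp only [zero_add, ordinaryHypergeometricSeries_apply_eq, smul_eq_mul, nsmul_eq_mul,
    fderiv_eq_smul_deriv] at hsum heuler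
  refine (heuler.add ((hsum b).mul_left b)).unique (((hsum (b + 1)).mul_left b).congr_fun
    fun n => ?_)
  linear_combination ((n.factorial : 𝕂)⁻¹ * (ascPochhammer 𝕂 n).eval a *
    ((ascPochhammer 𝕂 n).eval c)⁻¹ * x ^ n) * ascPochhammer_eval_mul_add b n

lemma hasDerivAt_rpow_mul_ordinaryHypergeometric (a b c : ℝ) {x : ℝ} (hx0 : 0 < x) (hx1 : x < 1) :
    HasDerivAt (fun y => y ^ b * ₂F₁ a b c y) (b * x ^ (b - 1) * ₂F₁ a (b + 1) c x) x := by
  have hx : ‖x‖ < 1 := by rwa [Real.norm_of_nonneg hx0.le]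
  have hpow : HasDerivAt (fun y => y ^ b) (b * x ^ (b - 1)) x :=
    Real.hasDerivAt_rpow_const (Or.inl hx0.ne')
  refine (hpow.mul (differentiableAt_ordinaryHypergeometric a b c hx).hasDerivAt).congr_deriv ?_
  have hsplit : x ^ b = x ^ (b - 1) * x := by rw [← Real.rpow_add_one hx0.ne', sub_add_cancel]
  rw [hsplit]
  linear_combination x ^ (b - 1) * mul_deriv_ordinaryHypergeometric_add a b c hx

lemma ordinaryHypergeometric_self_right (a : ℝ) {b x : ℝ} (hb : ∀ k : ℕ, b ≠ -k) (hx : |x| < 1) :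
    ₂F₁ a b b x = (1 - x) ^ (-a) := by
  have hmem : -x ∈ Metric.eball (0 : ℝ) 1 := by simpa [enorm_eq_nnnorm] using! hx
  have hb' : ∀ k : ℕ, (k : ℝ) ≠ -b := fun k hk => hb k (by rw [hk, neg_neg])
  have hsum := (Real.one_add_rpow_hasFPowerSeriesOnBall_zero (a := -a)).hasSum hmem
  rw [binomialSeries_eq_ordinaryHypergeometricSeries hb', neg_neg, zero_add,
    ← sub_eq_add_neg] at hsum
  simpa [ordinaryHypergeometric, FormalMultilinearSeries.sum, Function.comp_def,
    -FormalMultilinearSeries.apply_eq_prod_smul_coeff] using hsum.tsum_eq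

end OrdinaryHypergeometric

lemma poch_eq_ascPochhammer_eval (α : ℝ) (n : ℕ) : poch α n = (ascPochhammer ℝ n).eval α := by
  induction n with
  | zero => simp [poch]
  | succ n ih => rw [poch, ih, ascPochhammer_succ_eval]

lemma gauss2F1_eq_ordinaryHypergeometric (α β γ : ℝ) : Gauss2F1 α β γ = ₂F₁ α β γ := by
  funext z
  rw [Gauss2F1, ordinaryHypergeometric_eq_tsum]
  refine tsum_congr fun n => ?_
  rw [poch_eq_ascPochhammer_eval, poch_eq_ascPochhammer_eval, poch_eq_ascPochhammer_eval,
    smul_eq_mul]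
  ring

theorem deriv_rpow_mul_gauss2F1_general (α a : ℝ) (ha : ∀ k : ℕ, a + 1 / 2 ≠ -k)
    {z : ℝ} (hz0 : 0 < z) (hz1 : z < 1) :
    HasDerivAt (fun w : ℝ => w ^ (2 * a - 1) * Gauss2F1 α (a - 1 / 2) (a + 1 / 2) (w ^ 2))
      ((2 * a - 1) * z ^ (2 * a - 2) / (1 - z ^ 2) ^ α) z := by
  have hsq0 : 0 < z ^ 2 := by positivity
  have hsq1 : z ^ 2 < 1 := pow_lt_one₀ hz0.le hz1 two_ne_zero
  have hrpow_sq {w : ℝ} (hw : 0 < w) (s : ℝ) : (w ^ 2) ^ s = w ^ (2 * s) := by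
    rw [← Real.rpow_natCast_mul hw.le, Nat.cast_ofNat]
  have hbinom : ₂F₁ α (a - 1 / 2 + 1) (a + 1 / 2) (z ^ 2) = ((1 - z ^ 2) ^ α)⁻¹ := by
    rw [show a - 1 / 2 + 1 = a + 1 / 2 by ring,
      ordinaryHypergeometric_self_right α ha (by rwa [abs_of_pos hsq0]),
      Real.rpow_neg (sub_nonneg.2 hsq1.le)]
  have hcomp := HasDerivAt.comp (h := fun w : ℝ => w ^ 2) z
    (hasDerivAt_rpow_mul_ordinaryHypergeometric α (a - 1 / 2) (a + 1 / 2) hsq0 hsq1)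
    (hasDerivAt_pow 2 z)
  refine (hcomp.congr_of_eventuallyEq ?_).congr_deriv ?_
  · filter_upwards [eventually_gt_nhds hz0] with w hw
    rw [gauss2F1_eq_ordinaryHypergeometric, Function.comp_apply, hrpow_sq hw]
    ring_nf
  · have hexp : z ^ (2 * a - 2) = (z ^ 2) ^ (a - 1 / 2 - 1) * z := by
      rw [hrpow_sq hz0, ← Real.rpow_add_one hz0.ne']
      ring_nf
    rw [hbinom, hexp]
    ring

/-- For every real `a` not of the form `-j/2` (`j ∈ ℤ_{≥0}`) and every real `z` with `0 < z < 1`: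
`(d/dz)( z^{2a-1} ₂F₁(1/2, a-1/2; a+1/2; z²) ) = (2a-1) z^{2a-2} / √(1-z²)`. -/
theorem deriv_rpow_mul_gauss2F1 (a : ℝ) (ha : ∀ j : ℕ, a ≠ -(j : ℝ) / 2)
    (z : ℝ) (hz0 : 0 < z) (hz1 : z < 1) :
    deriv (fun w : ℝ => w ^ (2 * a - 1) * Gauss2F1 (1 / 2) (a - 1 / 2) (a + 1 / 2) (w ^ 2)) z =
      (2 * a - 1) * z ^ (2 * a - 2) / Real.sqrt (1 - z ^ 2) := by
  rw [Real.sqrt_eq_rpow]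
  exact (deriv_rpow_mul_gauss2F1_general (1 / 2) a
    (fun k hk => ha (2 * k + 1) (by push_cast; linarith)) hz0 hz1).deriv
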